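/- Every quantitative two-player reachability game has a finite-memory secure equilibrium. -/

import Mathlib

/-- A quantitative multiplayer reachability game: a finite directed graph whose
vertex set is partitioned among the players (via `owner`), with an initial vertex `v0`,
an edge relation `E` such that every vertex has an outgoing edge, and a goal set
`goal i` for each player `i`. -/
structure ReachGame (P : Type) (V : Type) where
  owner : V → P
  v0 : V
  E : V → V → Prop
  total : ∀ v : V, ∃ w : V, E v w
  goal : P → Set V

namespace ReachGame

variable {P V : Type} [DecidableEq P] (G : ReachGame P V)

/-- The last vertex of a history (with default `v0`). -/
def lastV (h : List V) : V := h.getLastD G.v0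

/-- A history: a nonempty finite path in the graph starting at `v0`. -/
def IsHistory (h : List V) : Prop :=
  h ≠ [] ∧ h.head? = some G.v0 ∧ List.Chain' G.E h

/-- A play: an infinite path starting at `v0`. -/
def IsPlay (ρ : ℕ → V) : Prop :=
  ρ 0 = G.v0 ∧ ∀ k : ℕ, G.E (ρ k) (ρ (k + 1))

/-- `σ` is a (total encoding of a) strategy of player `i`: on every history ending in
a vertex owned by `i` it chooses a successor along an edge. -/
def IsStrategy (i : P) (σ : List V → V) : Prop :=
  ∀ h : List V, G.IsHistory h → G.owner (G.lastV h) = i → G.E (G.lastV h) (σ h)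

/-- A strategy profile: one strategy per player. -/
def IsProfile (prof : P → List V → V) : Prop :=
  ∀ i : P, G.IsStrategy i (prof i)

/-- The history of length `n` (i.e. with `n` edges) obtained by letting the players
follow the profile `prof` from `v0`. -/
def outHist (prof : P → List V → V) : ℕ → List V
  | 0 => [G.v0]
  | n + 1 => outHist prof n ++ [prof (G.owner (G.lastV (outHist prof n))) (outHist prof n)]

/-- The outcome play of the strategy profile `prof`. -/
def outcome (prof : P → List V → V) (n : ℕ) : V :=
  G.lastV (G.outHist prof n)

/-- The cost of player `i` for the play `ρ`: the least `l` with `ρ l ∈ goal i`,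
and `⊤` (`+∞`) if there is no such `l`. -/
noncomputable def cost (i : P) (ρ : ℕ → V) : ℕ∞ :=
  sInf {n : ℕ∞ | ∃ l : ℕ, n = (l : ℕ∞) ∧ ρ l ∈ G.goal i}

/-- Nash equilibrium: no player can strictly decrease his cost by a unilateral
deviation. -/
def IsNash (prof : P → List V → V) : Prop :=
  ∀ (j : P) (σ' : List V → V), G.IsStrategy j σ' →
    G.cost j (G.outcome prof) ≤ G.cost j (G.outcome (Function.update prof j σ'))

/-- `h ≈_σ h'` : the strategy `σ` of player `i` behaves the same after `h` and `h'`,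
i.e. `σ (h ++ δ) = σ (h' ++ δ)` for every suffix `δ` making both `h ++ δ` and
`h' ++ δ` histories ending in a vertex of player `i`. -/
def MemEq (i : P) (σ : List V → V) (h h' : List V) : Prop :=
  ∀ δ : List V,
    G.IsHistory (h ++ δ) → G.owner (G.lastV (h ++ δ)) = i →
    G.IsHistory (h' ++ δ) → G.owner (G.lastV (h' ++ δ)) = i →
    σ (h ++ δ) = σ (h' ++ δ)

/-- A strategy of player `i` is finite-memory if the relation `≈_σ` has finitely many
equivalence classes on histories, i.e. there is a finite set of histories meeting
every class. -/
def FiniteMemory (i : P) (σ : List V → V) : Prop :=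
  ∃ S : Finset (List V), ∀ h : List V, G.IsHistory h →
    ∃ h' ∈ S, G.IsHistory h' ∧ G.MemEq i σ h h'

/-- A profile is finite-memory if each of its strategies is. -/
def FiniteMemoryProfile (prof : P → List V → V) : Prop :=
  ∀ i : P, G.FiniteMemory i (prof i)

/-- `Visit h`: the set of players whose goal set is visited by the finite path `h`. -/
def visitL (h : List V) : Set P := {i : P | ∃ v ∈ h, v ∈ G.goal i}

/-- The type of a strategy profile: the set of players whose goal set is visited by
the outcome. -/
def typeOf (prof : P → List V → V) : Set P :=
  {i : P | ∃ l : ℕ, G.outcome prof l ∈ G.goal i}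

/-! ### The truncated game `G^d` -/

/-- A strategy of player `i` in the truncated game `G^d` : it chooses a successor on
every history with less than `d` edges (list length `≤ d`) ending in a vertex of `i`. -/
def IsStrategyTrunc (d : ℕ) (i : P) (σ : List V → V) : Prop :=
  ∀ h : List V, G.IsHistory h → h.length ≤ d → G.owner (G.lastV h) = i →
    G.E (G.lastV h) (σ h)

/-- A strategy profile of the truncated game `G^d`. -/
def IsProfileTrunc (d : ℕ) (prof : P → List V → V) : Prop :=
  ∀ i : P, G.IsStrategyTrunc d i (prof i)

/-- The cost of player `i` for a finite play `h` (a list of vertices): the least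
position of `h` lying in `goal i`, and `⊤` if `goal i` is not visited. -/
noncomputable def costList (i : P) (h : List V) : ℕ∞ :=
  sInf {n : ℕ∞ | ∃ l : ℕ, n = (l : ℕ∞) ∧ l < h.length ∧ h.getD l G.v0 ∈ G.goal i}

/-- Nash equilibrium of the truncated game `G^d` (whose plays are the histories with
exactly `d` edges). -/
def IsNashTrunc (d : ℕ) (prof : P → List V → V) : Prop :=
  ∀ (j : P) (σ' : List V → V), G.IsStrategyTrunc d j σ' →
    G.costList j (G.outHist prof d) ≤
      G.costList j (G.outHist (Function.update prof j σ') d)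

/-- The type of a strategy profile of the truncated game `G^d`. -/
def typeOfTrunc (d : ℕ) (prof : P → List V → V) : Set P :=
  G.visitL (G.outHist prof d)

end ReachGame

/-- `(x₁,x₂) ≺₁ (y₁,y₂)` iff `x₁ > y₁`, or `x₁ = y₁` and `x₂ < y₂` :
player 1 prefers the cost profile `y` to `x`. -/
def prec1 (x y : ℕ∞ × ℕ∞) : Prop := y.1 < x.1 ∨ (x.1 = y.1 ∧ x.2 < y.2)

/-- `(x₁,x₂) ≺₂ (y₁,y₂)` iff `x₂ > y₂`, or `x₂ = y₂` and `x₁ < y₁` :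
player 2 prefers the cost profile `y` to `x`. -/
def prec2 (x y : ℕ∞ × ℕ∞) : Prop := y.2 < x.2 ∨ (x.2 = y.2 ∧ x.1 < y.1)

namespace ReachGame

variable {V : Type} (G : ReachGame (Fin 2) V)

/-- The pair of costs of the two players for the play `ρ`. -/
noncomputable def costPair (ρ : ℕ → V) : ℕ∞ × ℕ∞ := (G.cost 0 ρ, G.cost 1 ρ)

/-- Secure equilibrium: no player `j` has a `≺ⱼ`-profitable deviation. -/
def IsSecure (prof : Fin 2 → List V → V) : Prop :=
  (∀ σ' : List V → V, G.IsStrategy 0 σ' →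
    ¬ prec1 (G.costPair (G.outcome prof))
        (G.costPair (G.outcome (Function.update prof 0 σ')))) ∧
  (∀ σ' : List V → V, G.IsStrategy 1 σ' →
    ¬ prec2 (G.costPair (G.outcome prof))
        (G.costPair (G.outcome (Function.update prof 1 σ'))))

/-- The pair of costs of the two players for a finite play `h`. -/
noncomputable def costListPair (h : List V) : ℕ∞ × ℕ∞ := (G.costList 0 h, G.costList 1 h)

/-- Secure equilibrium of the truncated game `G^d`. -/
def IsSecureTrunc (d : ℕ) (prof : Fin 2 → List V → V) : Prop :=
  (∀ σ' : List V → V, G.IsStrategyTrunc d 0 σ' →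
    ¬ prec1 (G.costListPair (G.outHist prof d))
        (G.costListPair (G.outHist (Function.update prof 0 σ') d))) ∧
  (∀ σ' : List V → V, G.IsStrategyTrunc d 1 σ' →
    ¬ prec2 (G.costListPair (G.outHist prof d))
        (G.costListPair (G.outHist (Function.update prof 1 σ') d)))

end ReachGame

/-!
Give player `j` the utility `N * w (cost j) - w (cost k)`, where `k` is the opponent and
`w x = βˣ / (1 - β)` for some `0 < β < 1`. For large `N` this approximates the lexicographic
preference `≺ⱼ`. On the finite arena that records which goals have been visited, the utility is a
discounted sum of rewards, so the zero-sum game of `j` against the other players has a value and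
positional optimal choices, by Banach's fixed point theorem. Playing these choices, and punishing
the first deviator `j` with the choices that are optimal against `j`, is a Nash equilibrium with
finite memory. There are only finitely many positional choices, so one and the same trigger profile
is an equilibrium for arbitrarily large `N`. In the limit `N → ∞` it is a secure equilibrium.
-/

open Filter

section DiscountedSum

variable {S : Type*} {β : ℝ} {r val : S → ℝ} {x y : ℕ → S}

theorem summable_pow_mul_of_abs_le (hβ₀ : 0 ≤ β) (hβ₁ : β < 1) {a : ℕ → ℝ} {B : ℝ}
    (ha : ∀ n, |a n| ≤ B) : Summable fun n ↦ β ^ n * a n := by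
  refine .of_norm_bounded ((summable_geometric_of_lt_one hβ₀ hβ₁).mul_right B) fun n ↦ ?_
  rw [Real.norm_eq_abs, abs_mul, abs_of_nonneg (pow_nonneg hβ₀ n)]
  exact mul_le_mul_of_nonneg_left (ha n) (pow_nonneg hβ₀ n)

theorem summable_pow_mul_comp [Finite S] (hβ₀ : 0 ≤ β) (hβ₁ : β < 1) (f : S → ℝ) (x : ℕ → S) :
    Summable fun n ↦ β ^ n * f (x n) := by
  obtain ⟨B, hB⟩ := (Set.finite_range fun s ↦ |f s|).bddAbove
  exact summable_pow_mul_of_abs_le hβ₀ hβ₁ fun n ↦ hB ⟨x n, rfl⟩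

/-- The `β`-discounted sum of the rewards `r` collected along the path `x`. -/
noncomputable def discountedSum (β : ℝ) (r : S → ℝ) (x : ℕ → S) : ℝ :=
  ∑' n, β ^ n * r (x n)

theorem discountedSum_eq_sum_add [Finite S] (hβ₀ : 0 ≤ β) (hβ₁ : β < 1) (r : S → ℝ) (x : ℕ → S)
    (N : ℕ) :
    discountedSum β r x =
      ∑ n ∈ Finset.range N, β ^ n * r (x n) + β ^ N * discountedSum β r fun n ↦ x (n + N) := by
  rw [discountedSum, ← (summable_pow_mul_comp hβ₀ hβ₁ r x).sum_add_tsum_nat_add N, discountedSum,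
    ← tsum_mul_left]
  congr 2 with n
  ring

theorem discountedSum_neg (r : S → ℝ) (x : ℕ → S) :
    discountedSum β (fun s ↦ -r s) x = -discountedSum β r x := by
  simp only [discountedSum, mul_neg, tsum_neg]

-- The rewards are dominated by the telescoping series `∑ (βⁿ val (x n) - βⁿ⁺¹ val (x (n + 1)))`.
theorem discountedSum_le [Finite S] (hβ₀ : 0 ≤ β) (hβ₁ : β < 1)
    (h : ∀ n, r (x n) + β * val (x (n + 1)) ≤ val (x n)) : discountedSum β r x ≤ val (x 0) := by
  have summable_val := summable_pow_mul_comp hβ₀ hβ₁ val x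
  have summable_succ := (summable_nat_add_iff 1).2 summable_val
  calc discountedSum β r x
      ≤ ∑' n, (β ^ n * val (x n) - β ^ (n + 1) * val (x (n + 1))) := by
        refine (summable_pow_mul_comp hβ₀ hβ₁ r x).tsum_le_tsum (fun n ↦ ?_)
          (summable_val.sub summable_succ)
        rw [pow_succ, mul_assoc, ← mul_sub]
        exact mul_le_mul_of_nonneg_left (le_sub_iff_add_le.2 (h n)) (pow_nonneg hβ₀ n)
    _ = val (x 0) := by
        rw [summable_val.tsum_sub summable_succ, summable_val.tsum_eq_zero_add]
        simp

theorem le_discountedSum [Finite S] (hβ₀ : 0 ≤ β) (hβ₁ : β < 1)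
    (h : ∀ n, val (x n) ≤ r (x n) + β * val (x (n + 1))) : val (x 0) ≤ discountedSum β r x := by
  rw [← neg_le_neg_iff, ← discountedSum_neg]
  exact discountedSum_le (val := fun s ↦ -val s) hβ₀ hβ₁ fun n ↦ by linarith [h n]

theorem discountedSum_le_discountedSum [Finite S] (hβ₀ : 0 ≤ β) (hβ₁ : β < 1) {N : ℕ}
    (agree : ∀ n ≤ N, y n = x n)
    (hy : ∀ n ≥ N, r (y n) + β * val (y (n + 1)) ≤ val (y n))
    (hx : ∀ n ≥ N, val (x n) ≤ r (x n) + β * val (x (n + 1))) :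
    discountedSum β r y ≤ discountedSum β r x := by
  have tail_le :=
    calc discountedSum β r (fun n ↦ y (n + N))
        ≤ val (y (0 + N)) := discountedSum_le (x := fun n ↦ y (n + N)) hβ₀ hβ₁
          fun n ↦ by simpa only [Nat.add_right_comm n 1 N] using hy (n + N) (by omega)
      _ = val (x (0 + N)) := by rw [zero_add, agree N le_rfl]
      _ ≤ discountedSum β r (fun n ↦ x (n + N)) := le_discountedSum (x := fun n ↦ x (n + N)) hβ₀ hβ₁
          fun n ↦ by simpa only [Nat.add_right_comm n 1 N] using hx (n + N) (by omega)
  have initial_eq : ∑ n ∈ Finset.range N, β ^ n * r (y n) = ∑ n ∈ Finset.range N, β ^ n * r (x n) :=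
    Finset.sum_congr rfl fun n hn ↦ by rw [agree n (Finset.mem_range.1 hn).le]
  rw [discountedSum_eq_sum_add hβ₀ hβ₁ r y N, discountedSum_eq_sum_add hβ₀ hβ₁ r x N, initial_eq]
  gcongr

end DiscountedSum

section ZeroSum

variable {S : Type*} {β : ℝ} {R : S → S → Prop} {own : Set S} {r : S → ℝ}

open Classical in
/-- Shapley's value-iteration operator of the zero-sum `β`-discounted game on the graph `R` in
which the maximizer moves at the states of `own` and the minimizer at all others. -/
noncomputable def shapleyOperator (β : ℝ) (R : S → S → Prop) (own : Set S) (r : S → ℝ)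
    (f : S → ℝ) (s : S) : ℝ :=
  r s + β * if s ∈ own then ⨆ t : {t // R s t}, f t else ⨅ t : {t // R s t}, f t

theorem shapleyOperator_le_add [Finite S] (hβ₀ : 0 ≤ β) (total : ∀ s, ∃ t, R s t)
    {f g : S → ℝ} {d : ℝ} (h : ∀ t, f t ≤ g t + d) (s : S) :
    shapleyOperator β R own r f s ≤ shapleyOperator β R own r g s + β * d := by
  have : Nonempty {t // R s t} := nonempty_subtype.2 (total s)
  rw [shapleyOperator, shapleyOperator, add_assoc, ← mul_add]
  gcongr
  split_ifs
  · refine ciSup_le fun t ↦ (h t).trans ?_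
    gcongr
    exact le_ciSup (f := fun t : {t // R s t} ↦ g t) (Set.finite_range _).bddAbove t
  · refine sub_le_iff_le_add.1 (le_ciInf fun t ↦ sub_le_iff_le_add.2 ?_)
    exact (ciInf_le (f := fun t : {t // R s t} ↦ f t) (Set.finite_range _).bddBelow t).trans (h t)

theorem contractingWith_shapleyOperator [Fintype S] (hβ₀ : 0 ≤ β) (hβ₁ : β < 1)
    (total : ∀ s, ∃ t, R s t) :
    ContractingWith ⟨β, hβ₀⟩ (shapleyOperator β R own r) := by
  refine ⟨hβ₁, LipschitzWith.of_dist_le_mul fun f g ↦ ?_⟩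
  have le_add_dist (f g : S → ℝ) (t : S) : f t ≤ g t + dist f g :=
    sub_le_iff_le_add'.1 ((le_abs_self _).trans (dist_le_pi_dist f g t))
  refine (dist_pi_le_iff (mul_nonneg hβ₀ dist_nonneg)).2 fun s ↦ abs_sub_le_iff.2 ⟨?_, ?_⟩
  · exact sub_le_iff_le_add'.2 (shapleyOperator_le_add hβ₀ total (le_add_dist f g) s)
  · rw [dist_comm f g]
    exact sub_le_iff_le_add'.2 (shapleyOperator_le_add hβ₀ total (le_add_dist g f) s)

/-- `val` solves the optimality equations of the zero-sum `β`-discounted game on the graph `R` in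
which `own` is the set of states of the maximizer, and the positional choice `c` attains `val` for
both players. -/
structure IsPositionallyOptimal (β : ℝ) (R : S → S → Prop) (own : Set S) (r : S → ℝ)
    (val : S → ℝ) (c : S → S) : Prop where
  rel (s : S) : R s (c s)
  eq (s : S) : val s = r s + β * val (c s)
  le_of_mem {s t : S} : s ∈ own → R s t → r s + β * val t ≤ val s
  le_of_notMem {s t : S} : s ∉ own → R s t → val s ≤ r s + β * val t

theorem exists_isPositionallyOptimal [Finite S] (hβ₀ : 0 ≤ β) (hβ₁ : β < 1)
    (total : ∀ s, ∃ t, R s t) (own : Set S) (r : S → ℝ) :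
    ∃ val c, IsPositionallyOptimal β R own r val c := by
  have := Fintype.ofFinite S
  obtain ⟨val, hval⟩ : ∃ val, shapleyOperator β R own r val = val :=
    ⟨_, (contractingWith_shapleyOperator hβ₀ hβ₁ total).fixedPoint_isFixedPt⟩
  have val_of_mem {s} (hs : s ∈ own) : r s + β * ⨆ t : {t // R s t}, val t = val s := by
    simpa only [shapleyOperator, if_pos hs] using congrFun hval s
  have val_of_notMem {s} (hs : s ∉ own) : r s + β * ⨅ t : {t // R s t}, val t = val s := by
    simpa only [shapleyOperator, if_neg hs] using congrFun hval s
  have exists_attaining (s : S) : ∃ t, R s t ∧ val s = r s + β * val t := by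
    have : Nonempty {t // R s t} := nonempty_subtype.2 (total s)
    by_cases hs : s ∈ own
    · obtain ⟨t, ht⟩ := exists_eq_ciSup_of_finite (f := fun t : {t // R s t} ↦ val t)
      exact ⟨t, t.2, by rw [ht, val_of_mem hs]⟩
    · obtain ⟨t, ht⟩ := exists_eq_ciInf_of_finite (f := fun t : {t // R s t} ↦ val t)
      exact ⟨t, t.2, by rw [ht, val_of_notMem hs]⟩
  choose c rel eq using exists_attaining
  refine ⟨val, c, rel, eq, fun {s t} hs hst ↦ ?_, fun {s t} hs hst ↦ ?_⟩
  · rw [← val_of_mem hs]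
    gcongr
    exact le_ciSup (f := fun t : {t // R s t} ↦ val t) (Set.finite_range _).bddAbove ⟨t, hst⟩
  · rw [← val_of_notMem hs]
    gcongr
    exact ciInf_le (f := fun t : {t // R s t} ↦ val t) (Set.finite_range _).bddBelow ⟨t, hst⟩

end ZeroSum

namespace ReachGame

variable {P V : Type} (G : ReachGame P V)

section Histories

/-- The states of the arena on which goal visits are recorded: a vertex together with the set of
players whose goal has been visited so far, the current vertex included. -/
abbrev Config (P V : Type) := V × Set P

/-- The configuration reached by the history `h`. -/
def config (h : List V) : Config P V := (G.lastV h, G.visitL h)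

/-- The edge relation between configurations induced by `G.E`. -/
def Step (s t : Config P V) : Prop := G.E s.1 t.1 ∧ t.2 = s.2 ∪ {i | t.1 ∈ G.goal i}

variable {G} in
theorem Step.eq_of_fst_eq {s t t' : Config P V} (ht : G.Step s t) (ht' : G.Step s t')
    (h : t.1 = t'.1) : t = t' :=
  Prod.ext h (by rw [ht.2, ht'.2, h])

theorem exists_step (s : Config P V) : ∃ t, G.Step s t := by
  obtain ⟨w, hw⟩ := G.total s.1
  exact ⟨(w, s.2 ∪ {i | w ∈ G.goal i}), hw, rfl⟩

theorem lastV_concat (h : List V) (w : V) : G.lastV (h ++ [w]) = w := by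
  simp [lastV]

theorem visitL_concat (h : List V) (w : V) :
    G.visitL (h ++ [w]) = G.visitL h ∪ {i | w ∈ G.goal i} := by
  ext i
  simp [visitL, or_and_right, exists_or]

theorem config_concat (h : List V) (w : V) :
    G.config (h ++ [w]) = (w, (G.config h).2 ∪ {i | w ∈ G.goal i}) := by
  rw [config, lastV_concat, visitL_concat, config]

theorem step_config_concat {h : List V} {w : V} (hw : G.E (G.lastV h) w) :
    G.Step (G.config h) (G.config (h ++ [w])) := by
  rw [config_concat]
  exact ⟨hw, rfl⟩

variable {G} in
theorem IsHistory.concat {h : List V} {w : V} (hh : G.IsHistory h) (hw : G.E (G.lastV h) w) :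
    G.IsHistory (h ++ [w]) := by
  obtain ⟨ne_nil, head_eq, chain⟩ := hh
  refine ⟨by simp, by rw [List.head?_append, head_eq, Option.some_or],
    List.isChain_append.2 ⟨chain, .singleton w, fun v hv u hu ↦ ?_⟩⟩
  obtain rfl : w = u := by simpa using hu
  rwa [lastV, List.getLastD_eq_getLast?, Option.mem_def.1 hv] at hw

theorem outHist_ne_nil (prof : P → List V → V) (n : ℕ) : G.outHist prof n ≠ [] := by
  cases n <;> simp [outHist]

variable {G} in
theorem IsProfile.isHistory_outHist {prof : P → List V → V} (hp : G.IsProfile prof) (n : ℕ) :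
    G.IsHistory (G.outHist prof n) := by
  induction n with
  | zero => exact ⟨by simp [outHist], by simp [outHist], .singleton _⟩
  | succ n ih => exact ih.concat (hp _ _ ih rfl)

variable {G} in
theorem IsProfile.step_config_outHist {prof : P → List V → V} (hp : G.IsProfile prof) (n : ℕ) :
    G.Step (G.config (G.outHist prof n)) (G.config (G.outHist prof (n + 1))) :=
  G.step_config_concat (hp _ _ (hp.isHistory_outHist n) rfl)

variable {G} in
theorem IsProfile.update [DecidableEq P] {prof : P → List V → V} (hp : G.IsProfile prof) {j : P}
    {σ : List V → V} (hσ : G.IsStrategy j σ) : G.IsProfile (Function.update prof j σ) := by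
  intro i
  obtain rfl | hij := eq_or_ne i j
  · rwa [Function.update_self]
  · rw [Function.update_of_ne hij]
    exact hp i

/-- The configuration of the play `ρ` after `n` moves. -/
def playConfig (ρ : ℕ → V) (n : ℕ) : Config P V := (ρ n, {i | ∃ l ≤ n, ρ l ∈ G.goal i})

theorem config_outHist (prof : P → List V → V) (n : ℕ) :
    G.config (G.outHist prof n) = G.playConfig (G.outcome prof) n := by
  refine Prod.ext rfl ?_
  induction n with
  | zero => simp [config, playConfig, visitL, outHist, outcome, lastV]
  | succ n ih =>
    rw [outHist, config_concat, ih]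
    ext i
    simp [playConfig, Nat.le_succ_iff_eq_or_le, or_and_right, exists_or, or_comm, outcome, outHist,
      lastV_concat]

theorem mem_playConfig_snd_iff (ρ : ℕ → V) (n : ℕ) (i : P) :
    i ∈ (G.playConfig ρ n).2 ↔ G.cost i ρ ≤ n := by
  constructor
  · rintro ⟨l, hl, hgoal⟩
    calc G.cost i ρ ≤ l := sInf_le ⟨l, rfl, hgoal⟩
      _ ≤ n := by exact_mod_cast hl
  · intro hcost
    obtain ⟨_, ⟨l, rfl, hgoal⟩, hl⟩ :=
      sInf_lt_iff.1 (hcost.trans_lt (ENat.natCast_lt_natCast.2 n.lt_succ_self))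
    exact ⟨l, Nat.lt_succ_iff.1 (ENat.natCast_lt_natCast.1 hl), hgoal⟩

end Histories

theorem finiteMemory_of_finite {M : Type*} [Finite M] (mem : List V → M)
    (mem_concat : ∀ h h' w, h ≠ [] → h' ≠ [] → mem h = mem h' → mem (h ++ [w]) = mem (h' ++ [w]))
    (out : M → V) (i : P) : G.FiniteMemory i fun h ↦ out (mem h) := by
  obtain ⟨S, hS, bij⟩ := Set.exists_subset_bijOn {h | G.IsHistory h} mem
  have S_finite : S.Finite := bij.finite_iff_finite.2 (Set.toFinite _)
  refine ⟨S_finite.toFinset, fun h hh ↦ ?_⟩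
  obtain ⟨h', hh', mem_eq⟩ := bij.surjOn ⟨h, hh, rfl⟩
  suffices mem_append : ∀ δ, mem (h ++ δ) = mem (h' ++ δ) from
    ⟨h', S_finite.mem_toFinset.2 hh', hS hh', fun δ _ _ _ _ ↦ congrArg out (mem_append δ)⟩
  intro δ
  induction δ using List.reverseRecOn with
  | nil => simpa using mem_eq.symm
  | append_singleton δ w ih =>
    rw [← List.append_assoc, ← List.append_assoc]
    exact mem_concat _ _ w (by simp [hh.1]) (by simp [(hS hh').1]) ih

section Trigger

variable (c : P → Config P V → Config P V)

/-- The move after `h` when every player `i` follows his own positional choice `c i`. -/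
def agreedMove (h : List V) : V := (c (G.owner (G.lastV h)) (G.config h)).1

open Classical in
/-- The first player who left the agreed moves along the history `h`, if there is one. -/
noncomputable def deviator (h : List V) : Option P :=
  h.reverseRecOn none fun h w d ↦
    if h = [] then none
    else d.or (if w = G.agreedMove c h then none else some (G.owner (G.lastV h)))

/-- The trigger profile: the players make the agreed moves until some player `j` deviates, and then
all of them play the positional choice `c j` forever. -/
noncomputable def trigger (_ : P) (h : List V) : V :=
  (c ((G.deviator c h).getD (G.owner (G.lastV h))) (G.config h)).1

variable {c}

theorem deviator_singleton (v : V) : G.deviator c [v] = none := by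
  rw [deviator, ← List.nil_append [v], List.reverseRecOn_concat, if_pos rfl]

open Classical in
theorem deviator_concat {h : List V} (hh : h ≠ []) (w : V) :
    G.deviator c (h ++ [w]) =
      (G.deviator c h).or (if w = G.agreedMove c h then none else some (G.owner (G.lastV h))) := by
  rw [deviator, List.reverseRecOn_concat, if_neg hh, deviator]

theorem deviator_concat_eq_none_iff {h : List V} (hh : h ≠ []) {w : V} :
    G.deviator c (h ++ [w]) = none ↔ G.deviator c h = none ∧ w = G.agreedMove c h := by
  simp [G.deviator_concat hh]

theorem trigger_of_deviator_eq_none {h : List V} (hh : G.deviator c h = none) (i : P) :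
    G.trigger c i h = G.agreedMove c h := by
  rw [trigger, hh, Option.getD_none, agreedMove]

theorem trigger_of_deviator_eq_some {h : List V} {j : P} (hh : G.deviator c h = some j) (i : P) :
    G.trigger c i h = (c j (G.config h)).1 := by
  rw [trigger, hh, Option.getD_some]

theorem isProfile_trigger (hc : ∀ i s, G.Step s (c i s)) : G.IsProfile (G.trigger c) :=
  fun _ h _ _ ↦ (hc _ (G.config h)).1

theorem finiteMemoryProfile_trigger [Finite P] [Finite V] (c : P → Config P V → Config P V) :
    G.FiniteMemoryProfile (G.trigger c) := by
  refine fun i ↦ G.finiteMemory_of_finite (fun h ↦ (G.config h, G.deviator c h))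
    (fun h h' w hh hh' mem_eq ↦ ?_) (fun m ↦ (c (m.2.getD (G.owner m.1.1)) m.1).1) i
  obtain ⟨config_eq, deviator_eq⟩ := Prod.mk.inj mem_eq
  have lastV_eq : G.lastV h = G.lastV h' := congrArg Prod.fst config_eq
  have agreedMove_eq : G.agreedMove c h = G.agreedMove c h' := by
    rw [agreedMove, agreedMove, config_eq, lastV_eq]
  rw [config_concat, config_concat, G.deviator_concat hh, G.deviator_concat hh', config_eq,
    deviator_eq, agreedMove_eq, lastV_eq]

theorem deviator_outHist_trigger (n : ℕ) :
    G.deviator c (G.outHist (G.trigger c) n) = none := by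
  induction n with
  | zero => exact G.deviator_singleton G.v0
  | succ n ih =>
    exact (G.deviator_concat_eq_none_iff (G.outHist_ne_nil _ n)).2
      ⟨ih, G.trigger_of_deviator_eq_none ih _⟩

theorem outHist_eq_of_deviator_eq_none {q : P → List V → V} {n : ℕ}
    (h : G.deviator c (G.outHist q n) = none) : G.outHist q n = G.outHist (G.trigger c) n := by
  induction n with
  | zero => rfl
  | succ n ih =>
    obtain ⟨prev, agreed⟩ := (G.deviator_concat_eq_none_iff (G.outHist_ne_nil q n)).1 h
    rw [outHist, outHist, agreed, ← ih prev, G.trigger_of_deviator_eq_none prev]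

theorem config_outHist_trigger_succ (hc : ∀ i s, G.Step s (c i s)) (n : ℕ) :
    G.config (G.outHist (G.trigger c) (n + 1)) =
      c (G.owner (G.lastV (G.outHist (G.trigger c) n))) (G.config (G.outHist (G.trigger c) n)) := by
  refine ((G.isProfile_trigger hc).step_config_outHist n).eq_of_fst_eq (hc _ _) ?_
  rw [outHist, config_concat, G.trigger_of_deviator_eq_none (G.deviator_outHist_trigger n)]
  rfl

section Deviation

variable {j : P} {q : P → List V → V}

theorem deviator_outHist_eq_none_or_some (hq : ∀ i ≠ j, q i = G.trigger c i) (n : ℕ) :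
    G.deviator c (G.outHist q n) = none ∨ G.deviator c (G.outHist q n) = some j := by
  induction n with
  | zero => exact .inl (G.deviator_singleton G.v0)
  | succ n ih =>
    rw [outHist, G.deviator_concat (G.outHist_ne_nil q n)]
    rcases ih with ih | ih
    · rw [ih, Option.none_or]
      by_cases howner : G.owner (G.lastV (G.outHist q n)) = j
      · rw [howner]
        split_ifs
        · exact .inl rfl
        · exact .inr rfl
      · rw [hq _ howner, G.trigger_of_deviator_eq_none ih, if_pos rfl]
        exact .inl rfl
    · exact .inr (by rw [ih, Option.some_or])

theorem antitone_deviator_outHist_eq_none (c : P → Config P V → Config P V) (q : P → List V → V) :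
    Antitone fun n ↦ G.deviator c (G.outHist q n) = none :=
  antitone_nat_of_succ_le fun n h ↦
    ((G.deviator_concat_eq_none_iff (G.outHist_ne_nil q n)).1 h).1

theorem outcome_eq_or_exists_deviation (hq : ∀ i ≠ j, q i = G.trigger c i) :
    G.outcome q = G.outcome (G.trigger c) ∨
      ∃ N, (∀ n ≤ N, G.outHist q n = G.outHist (G.trigger c) n) ∧
        ∀ n > N, G.deviator c (G.outHist q n) = some j := by
  classical
  by_cases never : ∀ n, G.deviator c (G.outHist q n) = none
  · exact .inl (funext fun n ↦
      congrArg G.lastV (G.outHist_eq_of_deviator_eq_none (never n)))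
  push Not at never
  obtain ⟨N, hN⟩ : ∃ N, Nat.find never = N + 1 :=
    Nat.exists_eq_succ_of_ne_zero fun h ↦
      Nat.find_spec never (h ▸ G.deviator_singleton G.v0)
  refine .inr ⟨N, fun n hn ↦ G.outHist_eq_of_deviator_eq_none (c := c) ?_, fun n hn ↦ ?_⟩
  · exact not_not.1 (Nat.find_min never (by omega))
  · refine (G.deviator_outHist_eq_none_or_some hq n).resolve_left fun h ↦ Nat.find_spec never ?_
    exact G.antitone_deviator_outHist_eq_none c q (by omega) h

theorem config_outHist_succ_of_deviator (hc : ∀ i s, G.Step s (c i s)) (hprof : G.IsProfile q)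
    (hq : ∀ i ≠ j, q i = G.trigger c i) {n : ℕ}
    (howner : G.owner (G.lastV (G.outHist q n)) ≠ j)
    (hdev : G.deviator c (G.outHist q (n + 1)) = some j) :
    G.config (G.outHist q (n + 1)) = c j (G.config (G.outHist q n)) := by
  have hdev_prev : G.deviator c (G.outHist q n) = some j := by
    refine (G.deviator_outHist_eq_none_or_some hq n).resolve_left fun h ↦ ?_
    have hdev_none : G.deviator c (G.outHist q (n + 1)) = none :=
      (G.deviator_concat_eq_none_iff (G.outHist_ne_nil q n)).2
        ⟨h, by rw [hq _ howner, G.trigger_of_deviator_eq_none h]⟩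
    simp [hdev_none] at hdev
  refine (hprof.step_config_outHist n).eq_of_fst_eq (hc _ _) ?_
  rw [outHist, config_concat, hq _ howner, G.trigger_of_deviator_eq_some hdev_prev]

end Deviation

end Trigger

section Equilibrium

variable {β : ℝ}

/-- Nash equilibrium with respect to arbitrary payoffs, which the players maximize. -/
def IsNashFor [DecidableEq P] (u : P → (ℕ → V) → ℝ) (prof : P → List V → V) : Prop :=
  ∀ (j : P) (σ : List V → V), G.IsStrategy j σ →
    u j (G.outcome (Function.update prof j σ)) ≤ u j (G.outcome prof)

/-- The `β`-discounted payoff of a play whose configurations yield the rewards `r`. -/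
noncomputable def discountedPayoff (β : ℝ) (r : Config P V → ℝ) (ρ : ℕ → V) : ℝ :=
  discountedSum β r (G.playConfig ρ)

theorem discountedPayoff_outcome (r : Config P V → ℝ) (prof : P → List V → V) :
    G.discountedPayoff β r (G.outcome prof) =
      discountedSum β r fun n ↦ G.config (G.outHist prof n) := by
  simp only [config_outHist, discountedPayoff]

theorem isNashFor_trigger [DecidableEq P] [Finite P] [Finite V] (hβ₀ : 0 ≤ β) (hβ₁ : β < 1)
    {r val : P → Config P V → ℝ} {c : P → Config P V → Config P V}
    (opt : ∀ j, IsPositionallyOptimal β G.Step {s | G.owner s.1 = j} (r j) (val j) (c j)) :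
    G.IsNashFor (fun j ↦ G.discountedPayoff β (r j)) (G.trigger c) := by
  intro j σ hσ
  have hc (i : P) (s : Config P V) : G.Step s (c i s) := (opt i).rel s
  have hprof := G.isProfile_trigger hc
  have hq (i : P) (hi : i ≠ j) : Function.update (G.trigger c) j σ i = G.trigger c i :=
    Function.update_of_ne hi _ _
  have hprof' := hprof.update hσ
  rcases G.outcome_eq_or_exists_deviation hq with outcome_eq | ⟨N, agree, deviated⟩
  · rw [outcome_eq]
  simp only [discountedPayoff_outcome]
  refine discountedSum_le_discountedSum (N := N) (val := val j) hβ₀ hβ₁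
    (fun n hn ↦ by rw [agree n hn]) (fun n hn ↦ ?_) (fun n _ ↦ ?_)
  · by_cases howner : G.owner (G.lastV (G.outHist (Function.update (G.trigger c) j σ) n)) = j
    · exact (opt j).le_of_mem howner (hprof'.step_config_outHist n)
    · rw [G.config_outHist_succ_of_deviator hc hprof' hq howner (deviated _ (Nat.lt_succ_of_le hn))]
      exact ((opt j).eq _).ge
  · by_cases howner : G.owner (G.lastV (G.outHist (G.trigger c) n)) = j
    · rw [G.config_outHist_trigger_succ hc, howner]
      exact ((opt j).eq _).le
    · exact (opt j).le_of_notMem howner (hprof.step_config_outHist n)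

theorem exists_isNashFor_trigger [DecidableEq P] [Finite P] [Finite V] (hβ₀ : 0 ≤ β) (hβ₁ : β < 1)
    (r : P → Config P V → ℝ) :
    ∃ c : P → Config P V → Config P V, (∀ i s, G.Step s (c i s)) ∧
      G.IsNashFor (fun j ↦ G.discountedPayoff β (r j)) (G.trigger c) := by
  choose val c opt using fun j ↦
    exists_isPositionallyOptimal hβ₀ hβ₁ G.exists_step {s | G.owner s.1 = j} (r j)
  exact ⟨c, fun i ↦ (opt i).rel, G.isNashFor_trigger hβ₀ hβ₁ opt⟩

theorem exists_frequently_isNashFor_trigger [DecidableEq P] [Finite P] [Finite V] (hβ₀ : 0 ≤ β)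
    (hβ₁ : β < 1) (r : ℕ → P → Config P V → ℝ) :
    ∃ c : P → Config P V → Config P V, (∀ i s, G.Step s (c i s)) ∧
      ∃ᶠ N in atTop, G.IsNashFor (fun j ↦ G.discountedPayoff β (r N j)) (G.trigger c) := by
  choose c hc hnash using fun N ↦ G.exists_isNashFor_trigger hβ₀ hβ₁ (r N)
  obtain ⟨c₀, infinite_fiber⟩ := Finite.exists_infinite_fiber c
  have infinite_fiber : (c ⁻¹' {c₀}).Infinite := Set.infinite_coe_iff.1 infinite_fiber
  obtain ⟨N₀, rfl⟩ := infinite_fiber.nonempty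
  refine ⟨c N₀, hc N₀, (Nat.frequently_atTop_iff_infinite.2 infinite_fiber).mono fun N hN ↦ ?_⟩
  rw [← (hN : c N = c N₀)]
  exact hnash N

end Equilibrium

end ReachGame

section LexicographicLimit

variable {β : ℝ}

/-- A strictly decreasing real weight of costs: `β ^ x / (1 - β)`, with `β ^ ⊤ = 0`. Summing over
the times from `x` on makes it a discounted sum of rewards for having visited a goal. -/
noncomputable def costWeight (β : ℝ) (x : ℕ∞) : ℝ := ∑' n : ℕ, β ^ n * if x ≤ n then 1 else 0

theorem summable_costWeight (hβ₀ : 0 ≤ β) (hβ₁ : β < 1) (x : ℕ∞) :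
    Summable fun n : ℕ ↦ β ^ n * if x ≤ n then (1 : ℝ) else 0 :=
  summable_pow_mul_of_abs_le hβ₀ hβ₁ (B := 1) fun n ↦ by split_ifs <;> simp

theorem strictAnti_costWeight (hβ₀ : 0 < β) (hβ₁ : β < 1) : StrictAnti (costWeight β) := by
  intro x y hxy
  lift x to ℕ using hxy.ne_top
  refine Summable.tsum_lt_tsum (i := x) (fun n ↦ ?_) ?_
    (summable_costWeight hβ₀.le hβ₁ y) (summable_costWeight hβ₀.le hβ₁ x)
  · have mono : y ≤ n → (x : ℕ∞) ≤ n := hxy.le.trans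
    gcongr
    split_ifs <;> simp_all
  · simp [hxy.not_ge, hβ₀]

theorem le_and_le_of_frequently_mul_sub_le {a a' b b' : ℝ}
    (h : ∃ᶠ N : ℕ in atTop, N * a' - b' ≤ N * a - b) : a' ≤ a ∧ (a' = a → b ≤ b') := by
  refine ⟨le_of_not_gt fun haa' ↦ h ?_, fun haa' ↦ ?_⟩
  · have tendsto := tendsto_natCast_atTop_atTop.atTop_mul_const (sub_pos.2 haa')
    filter_upwards [tendsto.eventually_gt_atTop (b' - b)] with N hN
    linarith
  · obtain ⟨N, hN⟩ := h.exists
    subst haa'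
    linarith

namespace ReachGame

variable {P V : Type} (G : ReachGame P V)

open Classical in
/-- The reward of player `j` against player `k`: he gains `N` at every moment from the first
visit to his own goal on, and loses `1` at every moment from the first visit to that of `k` on. -/
noncomputable def secureReward (N : ℕ) (j k : P) (s : Config P V) : ℝ :=
  N * (if j ∈ s.2 then 1 else 0) - if k ∈ s.2 then 1 else 0

theorem discountedPayoff_secureReward (hβ₀ : 0 ≤ β) (hβ₁ : β < 1) (N : ℕ) (j k : P) (ρ : ℕ → V) :
    G.discountedPayoff β (secureReward N j k) ρ =
      N * costWeight β (G.cost j ρ) - costWeight β (G.cost k ρ) := by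
  simp only [discountedPayoff, discountedSum, secureReward, mem_playConfig_snd_iff, costWeight,
    mul_sub, mul_left_comm _ (N : ℝ)]
  rw [((summable_costWeight hβ₀ hβ₁ _).mul_left _).tsum_sub (summable_costWeight hβ₀ hβ₁ _),
    tsum_mul_left]

theorem isSecure_of_frequently_isNashFor {G : ReachGame (Fin 2) V} {prof : Fin 2 → List V → V}
    (hβ₀ : 0 < β) (hβ₁ : β < 1)
    (h : ∃ᶠ N in atTop,
      G.IsNashFor (fun j ↦ G.discountedPayoff β (secureReward N j (1 - j))) prof) :
    G.IsSecure prof := by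
  have costWeight_le (j : Fin 2) (σ : List V → V) (hσ : G.IsStrategy j σ) :=
    le_and_le_of_frequently_mul_sub_le <| h.mono fun N hN ↦ by
      simpa only [discountedPayoff_secureReward _ hβ₀.le hβ₁] using hN j σ hσ
  have anti := strictAnti_costWeight hβ₀ hβ₁
  constructor
  · rintro σ hσ (hlt | ⟨heq, hlt⟩)
    · exact (costWeight_le 0 σ hσ).1.not_gt (anti hlt)
    · exact ((costWeight_le 0 σ hσ).2 (congrArg _ heq.symm)).not_gt (anti hlt)
  · rintro σ hσ (hlt | ⟨heq, hlt⟩)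
    · exact (costWeight_le 1 σ hσ).1.not_gt (anti hlt)
    · exact ((costWeight_le 1 σ hσ).2 (congrArg _ heq.symm)).not_gt (anti hlt)

end ReachGame

end LexicographicLimit

/-- Every quantitative two-player reachability game has a
finite-memory secure equilibrium. -/
theorem exists_finiteMemory_secure {V : Type} [Fintype V]
    (G : ReachGame (Fin 2) V) :
    ∃ prof : Fin 2 → List V → V,
      G.IsProfile prof ∧ G.FiniteMemoryProfile prof ∧ G.IsSecure prof := by
  obtain ⟨c, hc, hnash⟩ := G.exists_frequently_isNashFor_trigger (β := 1 / 2) (by norm_num)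
    (by norm_num) fun N j ↦ ReachGame.secureReward N j (1 - j)
  exact ⟨G.trigger c, G.isProfile_trigger hc, G.finiteMemoryProfile_trigger c,
    ReachGame.isSecure_of_frequently_isNashFor (by norm_num) (by norm_num) hnash⟩
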